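/- arXiv:1301.0156 — 6 statements merged into one kernel-verified Lean document; each statement's English description precedes it below -/
import Mathlib

section
/- Let ξ, η ∈ ℝ. The double inequality ξ·[(ln x − 9 ln(1+x) + 8 ln(2+x))/24 − (18 + 33x + 14x²)/(48(1+x)²(2+x))] < ψ(x) − (28x⁴ + 87x³ + 73x² + 3x − 12)/(6x(x+1)³(x+2)) − (43 ln(x+1) − 37 ln(x+2))/6 < η·[(ln x − 9 ln(1+x) + 8 ln(2+x))/24 − (18 + 33x + 14x²)/(48(1+x)²(2+x))] holds for all x ∈ (0,∞) if and only if ξ ≥ 4 and η ≤ 0. -/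
/-- The digamma function `ψ(x) = Γ'(x)/Γ(x)`. -/
noncomputable def digamma (x : ℝ) : ℝ := deriv Real.Gamma x / Real.Gamma x

open Filter Topology in
/-- Telescoping criterion for negativity. -/
theorem neg_of_diff (H D D' : ℝ → ℝ) (a : ℝ)
    (hH : ∀ x, a ≤ x → H x - H (x + 1) = D x)
    (hD : ∀ x, a ≤ x → HasDerivAt D (D' x) x)
    (hpos : ∀ x, a ≤ x → 0 < D' x) (hlim : Tendsto H atTop (𝓝 0)) : H a < 0 := by
  have hmono : StrictMonoOn D (Set.Ici a) := by
    apply strictMonoOn_of_deriv_pos (convex_Ici a)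
    · exact fun x hx => (hD x hx).continuousAt.continuousWithinAt
    · intro x hx
      rw [interior_Ici] at hx
      rw [(hD x (le_of_lt hx)).deriv]
      exact hpos x (le_of_lt hx)
  have hDlim : Tendsto D atTop (𝓝 0) := by
    have h1 : Tendsto (fun x => H x - H (x + 1)) atTop (𝓝 (0 - 0)) :=
      hlim.sub (hlim.comp (tendsto_atTop_add_const_right _ 1 tendsto_id))
    rw [sub_zero] at h1
    refine h1.congr' ?_
    filter_upwards [eventually_ge_atTop a] with x hx using hH x hx
  have hDneg : ∀ x, a ≤ x → D x < 0 := by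
    intro x hx
    have h1 : D x < D (x + 1) := hmono hx (by simp; linarith) (by linarith)
    have h2 : D (x + 1) ≤ 0 := by
      apply ge_of_tendsto hDlim
      filter_upwards [eventually_ge_atTop (x + 1)] with y hy
      exact hmono.monotoneOn (by simp; linarith) (by simp; linarith) hy
    linarith
  have hstep : ∀ x, a ≤ x → H x < H (x + 1) := by
    intro x hx
    have := hH x hx
    have := hDneg x hx
    linarith
  have hn : ∀ n : ℕ, H (a + 1) ≤ H (a + 1 + n) := by
    intro n
    induction n with
    | zero => simp
    | succ k ih =>
      have := hstep (a + 1 + k) (by have : (0:ℝ) ≤ k := Nat.cast_nonneg k; linarith)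
      push_cast
      rw [← add_assoc]
      linarith
  have h3 : H (a + 1) ≤ 0 := by
    have h4 : Tendsto (fun n : ℕ => H (a + 1 + n)) atTop (𝓝 0) :=
      hlim.comp (tendsto_atTop_add_const_left _ _ tendsto_natCast_atTop_atTop)
    exact ge_of_tendsto' h4 hn
  linarith [hstep a le_rfl]

theorem gamma_diff {x : ℝ} (hx : 0 < x) : DifferentiableAt ℝ Real.Gamma x :=
  Real.differentiableAt_Gamma (fun m => by
    have : (0 : ℝ) ≤ m := Nat.cast_nonneg m
    intro h
    linarith)

theorem digamma_add_one' {x : ℝ} (hx : 0 < x) : digamma (x + 1) = digamma x + 1 / x := by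
  have h1 : HasDerivAt (fun y => Real.Gamma (y + 1)) (deriv Real.Gamma (x + 1)) x :=
    (gamma_diff (by linarith : 0 < x + 1)).hasDerivAt.comp_add_const x 1
  have h2 : HasDerivAt (fun y => y * Real.Gamma y)
      (1 * Real.Gamma x + x * deriv Real.Gamma x) x :=
    (hasDerivAt_id x).mul (gamma_diff hx).hasDerivAt
  have h3 : HasDerivAt (fun y => Real.Gamma (y + 1))
      (1 * Real.Gamma x + x * deriv Real.Gamma x) x := by
    refine h2.congr_of_eventuallyEq ?_
    filter_upwards [eventually_ne_nhds hx.ne'] with y hy using Real.Gamma_add_one hy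
  have h4 := h1.unique h3
  have hG : Real.Gamma x ≠ 0 := (Real.Gamma_pos_of_pos hx).ne'
  unfold digamma
  rw [h4, Real.Gamma_add_one hx.ne']
  field_simp
  ring

theorem hasDerivAt_logGamma {x : ℝ} (hx : 0 < x) :
    HasDerivAt (Real.log ∘ Real.Gamma) (digamma x) x :=
  (gamma_diff hx).hasDerivAt.log (Real.Gamma_pos_of_pos hx).ne'

theorem slope_logGamma {x : ℝ} (hx : 0 < x) :
    slope (Real.log ∘ Real.Gamma) x (x + 1) = Real.log x := by
  rw [slope_def_field]
  simp only [Function.comp]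
  rw [Real.Gamma_add_one hx.ne', Real.log_mul hx.ne' (Real.Gamma_pos_of_pos hx).ne']
  simp

theorem digamma_le_log {x : ℝ} (hx : 0 < x) : digamma x ≤ Real.log x := by
  rw [← slope_logGamma hx]
  exact Real.convexOn_log_Gamma.le_slope_of_hasDerivAt hx
    (by simp; linarith) (by linarith) (hasDerivAt_logGamma hx)

theorem log_le_digamma {x : ℝ} (hx : 0 < x) : Real.log x ≤ digamma (x + 1) := by
  rw [← slope_logGamma hx]
  exact Real.convexOn_log_Gamma.slope_le_of_hasDerivAt hx
    (by simp; linarith) (by linarith) (hasDerivAt_logGamma (by linarith))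

/-- The bracket. -/
noncomputable def fB (x : ℝ) : ℝ :=
  (Real.log x - 9 * Real.log (1 + x) + 8 * Real.log (2 + x)) / 24 -
          (18 + 33 * x + 14 * x ^ 2) / (48 * (1 + x) ^ 2 * (2 + x))

/-- The elementary part of the middle term. -/
noncomputable def fE (x : ℝ) : ℝ :=
  (28 * x ^ 4 + 87 * x ^ 3 + 73 * x ^ 2 + 3 * x - 12) /
            (6 * x * (x + 1) ^ 3 * (x + 2)) +
          (43 * Real.log (x + 1) - 37 * Real.log (x + 2)) / 6

/-- Derivative of `fB`. -/
noncomputable def fB' (x : ℝ) : ℝ :=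
  (1 / 6 + x / 3 + 5 / 24 * x ^ 2) / (x * (x + 1) ^ 3 * (x + 2) ^ 2)

/-- Derivative of `fE`. -/
noncomputable def fE' (x : ℝ) : ℝ :=
  (4 + 20 * x + 283 / 6 * x ^ 2 + 133 / 2 * x ^ 3 + 115 / 2 * x ^ 4 + 181 / 6 * x ^ 5
    + 17 / 2 * x ^ 6 + x ^ 7) / (x ^ 2 * (x + 1) ^ 4 * (x + 2) ^ 2)

theorem fB_deriv {x : ℝ} (hx : 0 < x) : HasDerivAt fB (fB' x) x := by
  have i := hasDerivAt_id' x
  have h1 : HasDerivAt (fun y : ℝ => Real.log y) (1 / x) x := i.log hx.ne'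
  have h2 : HasDerivAt (fun y : ℝ => Real.log (1 + y)) (1 / (1 + x)) x :=
    (i.const_add 1).log (by positivity)
  have h3 : HasDerivAt (fun y : ℝ => Real.log (2 + y)) (1 / (2 + x)) x :=
    (i.const_add 2).log (by positivity)
  have h4 : HasDerivAt (fun y : ℝ => 18 + 33 * y + 14 * y ^ 2) (33 + 28 * x) x := by
    have := ((i.const_mul 33).const_add 18).add ((i.pow 2).const_mul 14)
    refine this.congr_deriv ?_
    simp only [Nat.cast_ofNat, Nat.add_one_sub_one, Pi.pow_apply, Pi.mul_apply]
    ring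
  have h5 : HasDerivAt (fun y : ℝ => 48 * (1 + y) ^ 2 * (2 + y))
      (96 * (1 + x) * (2 + x) + 48 * (1 + x) ^ 2) x := by
    have := ((((i.const_add 1).pow 2).const_mul 48).mul (i.const_add 2))
    refine this.congr_deriv ?_
    simp only [Nat.cast_ofNat, Nat.add_one_sub_one, Pi.pow_apply, Pi.mul_apply]
    ring
  have h := (((h1.sub (h2.const_mul 9)).add (h3.const_mul 8)).div_const 24).sub
    (h4.div h5 (by positivity))
  refine HasDerivAt.congr_deriv (f := fB) h ?_
  unfold fB'
  have : 1 + x ≠ 0 := by positivity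
  have : x + 1 ≠ 0 := by positivity
  have : 2 + x ≠ 0 := by positivity
  have : x + 2 ≠ 0 := by positivity
  rw [add_comm x 1, add_comm x 2]
  field_simp
  ring

theorem fE_deriv {x : ℝ} (hx : 0 < x) : HasDerivAt fE (fE' x) x := by
  have i := hasDerivAt_id' x
  have h2 : HasDerivAt (fun y : ℝ => Real.log (y + 1)) (1 / (x + 1)) x :=
    (i.add_const 1).log (by positivity)
  have h3 : HasDerivAt (fun y : ℝ => Real.log (y + 2)) (1 / (x + 2)) x :=
    (i.add_const 2).log (by positivity)
  have h4 : HasDerivAt (fun y : ℝ => 28 * y ^ 4 + 87 * y ^ 3 + 73 * y ^ 2 + 3 * y - 12)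
      (112 * x ^ 3 + 261 * x ^ 2 + 146 * x + 3) x := by
    have := (((((i.pow 4).const_mul 28).add ((i.pow 3).const_mul 87)).add
      ((i.pow 2).const_mul 73)).add (i.const_mul 3)).sub_const 12
    refine this.congr_deriv ?_
    simp only [Nat.cast_ofNat, Nat.add_one_sub_one, Pi.pow_apply, Pi.mul_apply]
    ring
  have h5 : HasDerivAt (fun y : ℝ => 6 * y * (y + 1) ^ 3 * (y + 2))
      (6 * (x + 1) ^ 3 * (x + 2) + 18 * x * (x + 1) ^ 2 * (x + 2) + 6 * x * (x + 1) ^ 3) x := by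
    have := (((i.const_mul 6).mul ((i.add_const 1).pow 3)).mul (i.add_const 2))
    refine this.congr_deriv ?_
    simp only [Nat.cast_ofNat, Nat.add_one_sub_one, Pi.pow_apply, Pi.mul_apply]
    ring
  have h := (h4.div h5 (by positivity)).add
    (((h2.const_mul 43).sub (h3.const_mul 37)).div_const 6)
  refine HasDerivAt.congr_deriv (f := fE) h ?_
  unfold fE'
  have : x + 1 ≠ 0 := by positivity
  have : x + 2 ≠ 0 := by positivity
  field_simp
  ring

open Filter Topology in
theorem fB_lim : Tendsto fB atTop (𝓝 0) := by
  have h1 := Real.tendsto_log_comp_add_sub_log 1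
  have h2 := Real.tendsto_log_comp_add_sub_log 2
  have h3 : Tendsto (fun x : ℝ => (18 + 33 * x + 14 * x ^ 2) / (48 * (1 + x) ^ 2 * (2 + x)))
      atTop (𝓝 0) := by
    refine tendsto_of_tendsto_of_tendsto_of_le_of_le' tendsto_const_nhds
      tendsto_inv_atTop_zero ?_ ?_
    · filter_upwards [eventually_gt_atTop 0] with x hx
      positivity
    · filter_upwards [eventually_gt_atTop 0] with x hx
      rw [inv_eq_one_div, div_le_div_iff₀ (by positivity) hx]
      ring_nf
      nlinarith [pow_pos hx 2, pow_pos hx 3]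
  have h := (((h1.const_mul (-9)).add (h2.const_mul 8)).div_const 24).sub h3
  simp only [mul_zero, add_zero, zero_div, sub_zero] at h
  refine h.congr (fun x => ?_)
  unfold fB
  rw [add_comm 1 x, add_comm 2 x]
  ring

open Filter Topology in
theorem fA_lim : Tendsto (fun x => digamma x - fE x) atTop (𝓝 0) := by
  have h1 := Real.tendsto_log_comp_add_sub_log 1
  have h2 := Real.tendsto_log_comp_add_sub_log 2
  have h3 : Tendsto (fun x : ℝ => (28 * x ^ 4 + 87 * x ^ 3 + 73 * x ^ 2 + 3 * x - 12) /
            (6 * x * (x + 1) ^ 3 * (x + 2))) atTop (𝓝 0) := by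
    have h100 : Tendsto (fun x : ℝ => 100 * x⁻¹) atTop (𝓝 0) := by
      simpa using (tendsto_inv_atTop_zero (𝕜 := ℝ)).const_mul 100
    refine tendsto_of_tendsto_of_tendsto_of_le_of_le' tendsto_const_nhds h100 ?_ ?_
    · filter_upwards [eventually_gt_atTop 1] with x hx
      have : 0 < x := by linarith
      apply div_nonneg _ (by positivity)
      have : 0 < x ^ 4 := by positivity
      have : 0 < x ^ 3 := by positivity
      nlinarith
    · filter_upwards [eventually_gt_atTop 1] with x hx
      have : 0 < x := by linarith
      rw [← div_eq_mul_inv, div_le_div_iff₀ (by positivity) this]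
      ring_nf
      nlinarith [pow_pos this 2, pow_pos this 3, pow_pos this 4, pow_pos this 5]
  have h4 : Tendsto (fun x : ℝ => digamma x - Real.log x) atTop (𝓝 0) := by
    have hinv : Tendsto (fun x : ℝ => - x⁻¹) atTop (𝓝 0) := by
      simpa using (tendsto_inv_atTop_zero (𝕜 := ℝ)).neg
    refine tendsto_of_tendsto_of_tendsto_of_le_of_le' hinv tendsto_const_nhds ?_ ?_
    · filter_upwards [eventually_gt_atTop 0] with x hx
      have := log_le_digamma hx
      rw [digamma_add_one' hx, one_div] at this
      linarith
    · filter_upwards [eventually_gt_atTop 0] with x hx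
      have := digamma_le_log hx
      linarith
  have h := (h4.sub h3).sub (((h1.const_mul 43).sub (h2.const_mul 37)).div_const 6)
  simp only [mul_zero, zero_div, sub_zero] at h
  refine h.congr (fun x => ?_)
  unfold fE
  ring

/-- Common denominator. -/
noncomputable def den (x : ℝ) : ℝ := x ^ 2 * (x + 1) ^ 4 * (x + 2) ^ 4 * (x + 3) ^ 2

/-- Numerator of the derivative of the difference of the middle term. -/
noncomputable def pA (x : ℝ) : ℝ :=
  77 / 6 * x ^ 2 + 127 / 3 * x ^ 3 + 419 / 6 * x ^ 4 + 172 / 3 * x ^ 5 + 67 / 3 * x ^ 6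
    + 10 / 3 * x ^ 7

/-- Numerator of the derivative of the difference of the bracket. -/
noncomputable def pB (x : ℝ) : ℝ :=
  6 * x + 319 / 12 * x ^ 2 + 1181 / 24 * x ^ 3 + 385 / 8 * x ^ 4 + 623 / 24 * x ^ 5
    + 175 / 24 * x ^ 6 + 5 / 6 * x ^ 7

theorem dA_eq {x : ℝ} (hx : 0 < x) : 1 / x ^ 2 - fE' x + fE' (x + 1) = pA x / den x := by
  unfold fE' pA den
  rw [show x + 1 + 1 = x + 2 by ring, show x + 1 + 2 = x + 3 by ring]
  have : x + 1 ≠ 0 := by positivity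
  have : x + 2 ≠ 0 := by positivity
  have : x + 3 ≠ 0 := by positivity
  field_simp
  ring

theorem dB_eq {x : ℝ} (hx : 0 < x) : fB' x - fB' (x + 1) = pB x / den x := by
  unfold fB' pB den
  rw [show x + 1 + 1 = x + 2 by ring, show x + 1 + 2 = x + 3 by ring]
  have : x + 1 ≠ 0 := by positivity
  have : x + 2 ≠ 0 := by positivity
  have : x + 3 ≠ 0 := by positivity
  field_simp
  ring

theorem main_neg (p q a : ℝ) (ha : 0 < a) (h : ∀ x, a ≤ x → 0 < p * pA x + q * pB x) :
    p * (digamma a - fE a) + q * fB a < 0 := by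
  refine neg_of_diff (fun x => p * (digamma x - fE x) + q * fB x)
    (fun x => p * (-x⁻¹ - fE x + fE (x + 1)) + q * (fB x - fB (x + 1)))
    (fun x => p * (pA x / den x) + q * (pB x / den x)) a ?_ ?_ ?_ ?_
  · intro x hx
    have hx0 : 0 < x := by linarith
    simp only [digamma_add_one' hx0]
    ring
  · intro x hx
    have hx0 : 0 < x := by linarith
    have hx1 : 0 < x + 1 := by linarith
    rw [← dA_eq hx0, ← dB_eq hx0]
    have h1 : HasDerivAt (fun y : ℝ => -y⁻¹) (1 / x ^ 2) x := by
      have := (hasDerivAt_inv hx0.ne').neg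
      refine this.congr_deriv ?_
      rw [neg_neg, one_div]
    exact (((h1.sub (fE_deriv hx0)).add ((fE_deriv hx1).comp_add_const x 1)).const_mul p).add
      (((fB_deriv hx0).sub ((fB_deriv hx1).comp_add_const x 1)).const_mul q)
  · intro x hx
    have hx0 : 0 < x := by linarith
    have hden : 0 < den x := by unfold den; positivity
    have := div_pos (h x hx) hden
    have h2 : p * (pA x / den x) + q * (pB x / den x) = (p * pA x + q * pB x) / den x := by ring
    rw [h2]
    exact this
  · simpa using (fA_lim.const_mul p).add (fB_lim.const_mul q)

theorem fB_neg {x : ℝ} (hx : 0 < x) : fB x < 0 := by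
  have := main_neg 0 1 x hx (fun y hy => by
    have : 0 < y := by linarith
    unfold pA pB
    rw [zero_mul, zero_add, one_mul]
    positivity)
  linarith

theorem fA_neg {x : ℝ} (hx : 0 < x) : digamma x - fE x < 0 := by
  have := main_neg 1 0 x hx (fun y hy => by
    have : 0 < y := by linarith
    unfold pA pB
    rw [zero_mul, add_zero, one_mul]
    positivity)
  linarith

theorem fA_gt {x : ℝ} (hx : 0 < x) : 4 * fB x < digamma x - fE x := by
  have := main_neg (-1) 4 x hx (fun y hy => by
    have : 0 < y := by linarith
    have h : 0 < 24 * y + 187 / 2 * y ^ 2 + 309 / 2 * y ^ 3 + 368 / 3 * y ^ 4 + 93 / 2 * y ^ 5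
      + 41 / 6 * y ^ 6 := by positivity
    unfold pA pB
    linarith)
  linarith

theorem fA_lt_of_lt {xi : ℝ} (h : xi < 4) :
    digamma (9 / (4 - xi)) - fE (9 / (4 - xi)) < xi * fB (9 / (4 - xi)) := by
  have he : 0 < 4 - xi := by linarith
  have := main_neg 1 (-xi) (9 / (4 - xi)) (by positivity) (fun y hy => by
    have hy0 : 0 < y := lt_of_lt_of_le (by positivity) hy
    have hy1 : 0 ≤ (4 - xi) * y - 9 := by
      rw [div_le_iff₀ he] at hy
      linarith
    have h1 : 0 ≤ ((4 - xi) * y - 9) * (6 + 319 / 12 * y + 1181 / 24 * y ^ 2 + 385 / 8 * y ^ 3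
      + 623 / 24 * y ^ 4 + 175 / 24 * y ^ 5 + 5 / 6 * y ^ 6) :=
      mul_nonneg hy1 (by positivity)
    have := pow_pos hy0 2
    have := pow_pos hy0 3
    have := pow_pos hy0 4
    have := pow_pos hy0 5
    have := pow_pos hy0 6
    unfold pA pB
    linarith)
  linarith

theorem fA_lower {x : ℝ} (hx : 0 < x) (hx1 : x < 1) : -39 ≤ digamma x - fE x := by
  have h1 := log_le_digamma (by linarith : 0 < x + 1)
  rw [digamma_add_one' (by linarith : 0 < x + 1), digamma_add_one' hx] at h1
  have h2 : 0 ≤ Real.log (x + 1) := Real.log_nonneg (by linarith)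
  have h2' : Real.log (x + 1) ≤ x := by
    have := Real.log_le_sub_one_of_pos (by linarith : 0 < x + 1)
    linarith
  have h3 : 0 ≤ Real.log (x + 2) := Real.log_nonneg (by linarith)
  have h4 : 1 / (x + 1) ≤ 1 := by
    rw [div_le_one (by linarith)]; linarith
  have h5 : (28 * x ^ 4 + 87 * x ^ 3 + 73 * x ^ 2 + 3 * x - 12) / (6 * x * (x + 1) ^ 3 * (x + 2))
      = - (1 / x) + (45 + 127 * x + 117 * x ^ 2 + 34 * x ^ 3) / (6 * (x + 1) ^ 3 * (x + 2)) := by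
    field_simp
    ring
  have h6 : (45 + 127 * x + 117 * x ^ 2 + 34 * x ^ 3) / (6 * (x + 1) ^ 3 * (x + 2)) ≤ 30 := by
    rw [div_le_iff₀ (by positivity)]
    have := pow_pos hx 2
    have := pow_pos hx 3
    have := pow_pos hx 4
    linarith
  unfold fE
  rw [h5]
  linarith

theorem fB_upper {x : ℝ} (hx : 0 < x) (hx1 : x < 1) : fB x ≤ (Real.log x + 16) / 24 := by
  have h2 : 0 ≤ Real.log (1 + x) := Real.log_nonneg (by linarith)
  have h3 : Real.log (2 + x) ≤ 2 := by
    have := Real.log_le_sub_one_of_pos (by linarith : 0 < 2 + x)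
    linarith
  have h4 : 0 ≤ (18 + 33 * x + 14 * x ^ 2) / (48 * (1 + x) ^ 2 * (2 + x)) := by positivity
  unfold fB
  linarith

theorem stmt_7 (xi eta : ℝ) :
    (∀ x : ℝ, x ∈ Set.Ioi (0 : ℝ) →
      xi * ((Real.log x - 9 * Real.log (1 + x) + 8 * Real.log (2 + x)) / 24 -
          (18 + 33 * x + 14 * x ^ 2) / (48 * (1 + x) ^ 2 * (2 + x))) <
        digamma x -
          (28 * x ^ 4 + 87 * x ^ 3 + 73 * x ^ 2 + 3 * x - 12) /
            (6 * x * (x + 1) ^ 3 * (x + 2)) -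
          (43 * Real.log (x + 1) - 37 * Real.log (x + 2)) / 6 ∧
      digamma x -
          (28 * x ^ 4 + 87 * x ^ 3 + 73 * x ^ 2 + 3 * x - 12) /
            (6 * x * (x + 1) ^ 3 * (x + 2)) -
          (43 * Real.log (x + 1) - 37 * Real.log (x + 2)) / 6 <
        eta * ((Real.log x - 9 * Real.log (1 + x) + 8 * Real.log (2 + x)) / 24 -
          (18 + 33 * x + 14 * x ^ 2) / (48 * (1 + x) ^ 2 * (2 + x)))) ↔
    4 ≤ xi ∧ eta ≤ 0 := by
  have key : ∀ x : ℝ, digamma x -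
          (28 * x ^ 4 + 87 * x ^ 3 + 73 * x ^ 2 + 3 * x - 12) /
            (6 * x * (x + 1) ^ 3 * (x + 2)) -
          (43 * Real.log (x + 1) - 37 * Real.log (x + 2)) / 6 = digamma x - fE x := by
    intro x
    unfold fE
    ring
  simp only [key]
  change (∀ x : ℝ, x ∈ Set.Ioi (0 : ℝ) →
    xi * fB x < digamma x - fE x ∧ digamma x - fE x < eta * fB x) ↔ _
  constructor
  · intro h
    constructor
    · by_contra! hlt
      have hp : 0 < 9 / (4 - xi) := div_pos (by norm_num) (by linarith)
      have h1 := (h (9 / (4 - xi)) hp).1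
      linarith [fA_lt_of_lt hlt]
    · by_contra! hpos
      set L : ℝ := 16 + 24 * 40 / eta with hL
      have hLpos : 0 < L := by positivity
      have hx : 0 < Real.exp (-L) := Real.exp_pos _
      have hx1 : Real.exp (-L) < 1 := by
        rw [← Real.exp_zero]
        exact Real.exp_lt_exp.mpr (by linarith)
      have h1 := (h _ hx).2
      have h2 := fA_lower hx hx1
      have h3 := mul_le_mul_of_nonneg_left (fB_upper hx hx1) hpos.le
      rw [Real.log_exp] at h3
      have h4 : eta * ((-L + 16) / 24) = -40 := by
        rw [hL]
        field_simp
        ring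
      linarith
  · rintro ⟨h1, h2⟩ x hx
    have hB := fB_neg hx
    refine ⟨?_, ?_⟩
    · have := mul_le_mul_of_nonpos_right h1 hB.le
      linarith [fA_gt hx]
    · have := mul_nonneg_of_nonpos_of_nonpos h2 hB.le
      linarith [fA_neg hx]
end

section
/- The function Q(t) = 2e^{2t} − e^t(t² − 6t + 18) + 8(t + 2) is strictly positive for all t ∈ (0,∞). -/
theorem pos_of_deriv_pos_aux (f g : ℝ → ℝ) (h0 : f 0 = 0) (hd : ∀ x, HasDerivAt f (g x) x)
    (hg : ∀ x, 0 < x → 0 < g x) (t : ℝ) (ht : 0 < t) : 0 < f t := by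
  have hm : StrictMonoOn f (Set.Ici 0) := by
    apply strictMonoOn_of_deriv_pos (convex_Ici 0)
    · exact fun x _ => (hd x).continuousAt.continuousWithinAt
    · intro x hx
      rw [interior_Ici] at hx
      rw [(hd x).deriv]
      exact hg x hx
  have h := hm (Set.mem_Ici.2 le_rfl) (Set.mem_Ici.2 ht.le) ht
  rwa [h0] at h

theorem stmt_12 (t : ℝ) (ht : t ∈ Set.Ioi (0 : ℝ)) :
    0 < 2 * Real.exp (2 * t) - Real.exp t * (t ^ 2 - 6 * t + 18) + 8 * (t + 2) := by
  have hE (x : ℝ) : HasDerivAt (fun x : ℝ => Real.exp (2 * x)) (Real.exp (2 * x) * (2 * 1)) x :=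
    ((hasDerivAt_id x).const_mul 2).exp
  have hp (b c x : ℝ) : HasDerivAt (fun x : ℝ => x ^ 2 - b * x + c) (2 * x - b) x := by
    have h := (((hasDerivAt_id x).pow 2).sub ((hasDerivAt_id x).const_mul b)).add_const c
    exact h.congr_deriv (by simp)
  refine pos_of_deriv_pos_aux
    (fun t => 2 * Real.exp (2 * t) - Real.exp t * (t ^ 2 - 6 * t + 18) + 8 * (t + 2))
    (fun t => 4 * Real.exp (2 * t) - Real.exp t * (t ^ 2 - 4 * t + 12) + 8)
    (by norm_num) ?_ ?_ t ht
  · intro x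
    have h := (((hE x).const_mul 2).sub ((Real.hasDerivAt_exp x).mul (hp 6 18 x))).add
      (((hasDerivAt_id x).add_const 2).const_mul 8)
    exact h.congr_deriv (by ring)
  · refine pos_of_deriv_pos_aux _
      (fun t => 8 * Real.exp (2 * t) - Real.exp t * (t ^ 2 - 2 * t + 8)) (by norm_num) ?_ ?_
    · intro x
      have h := (((hE x).const_mul 4).sub ((Real.hasDerivAt_exp x).mul (hp 4 12 x))).add_const 8
      exact h.congr_deriv (by ring)
    · intro x hx
      have h1 := Real.quadratic_le_exp_of_nonneg hx.le
      have h2 : Real.exp (2 * x) = Real.exp x * Real.exp x := by rw [← Real.exp_add]; ring_nf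
      have h3 : 0 < Real.exp x * (8 * Real.exp x - (x ^ 2 - 2 * x + 8)) :=
        mul_pos (Real.exp_pos x) (by nlinarith)
      simp only [h2]
      linarith
end

section
/- The function θ(t) = 2e^{5t}(t³ − 15t² + 78t − 140) + e^{4t}(t⁴ − 16t³ + 132t² − 420t + 1236) − 2e^{3t}(5t⁴ − 26t³ + 125t² − 132t + 1018) + e^{2t}(17t⁴ − 88t³ + 356t² − 228t + 1660) − e^t(8t⁴ − 38t³ + 40t² − 228t + 756) + 176 is strictly positive for all t ∈ (0,∞). -/
lemma aux_desc (x : ℝ) (j : ℕ) :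
    HasSum (fun n : ℕ => (n.descFactorial j : ℝ) * (x ^ n / (n.factorial : ℝ)))
      (x ^ j * Real.exp x) := by
  rw [← hasSum_nat_add_iff' j]
  have h0 : ∑ i ∈ Finset.range j, ((i.descFactorial j : ℝ) * (x ^ i / (i.factorial : ℝ))) = 0 := by
    apply Finset.sum_eq_zero
    intro i hi
    rw [Nat.descFactorial_of_lt (Finset.mem_range.mp hi)]
    simp
  rw [h0, sub_zero]
  have h1 : HasSum (fun n : ℕ => x ^ n / (n.factorial : ℝ)) (Real.exp x) := by
    rw [Real.exp_eq_exp_ℝ]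
    exact NormedSpace.expSeries_div_hasSum_exp x
  refine (h1.mul_left (x ^ j)).congr_fun ?_
  intro n
  have h2 := Nat.factorial_mul_descFactorial (Nat.le_add_left j n)
  rw [Nat.add_sub_cancel] at h2
  have h3 : ((n + j).factorial : ℝ) = (n.factorial : ℝ) * ((n + j).descFactorial j : ℝ) := by
    exact_mod_cast h2.symm
  have h4 : ((n + j).factorial : ℝ) ≠ 0 := by positivity
  have h5 : (n.factorial : ℝ) ≠ 0 := by positivity
  rw [h3] at h4
  have h6 := right_ne_zero_of_mul h4
  rw [h3]
  field_simp
  ring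

/-- The polynomial factor of the Taylor coefficients. -/
noncomputable def auxP (k a b c d e : ℝ) (n : ℕ) : ℝ :=
  a + b / k * n + c / k ^ 2 * (n * (n - 1)) + d / k ^ 3 * (n * (n - 1) * (n - 2))
    + e / k ^ 4 * (n * (n - 1) * (n - 2) * (n - 3))

lemma aux_poly (t k a b c d e : ℝ) (hk : k ≠ 0) :
    HasSum (fun n : ℕ => auxP k a b c d e n * k ^ n * (t ^ n / (n.factorial : ℝ)))
      (Real.exp (k * t) * (e * t ^ 4 + d * t ^ 3 + c * t ^ 2 + b * t + a)) := by
  have h := (((((aux_desc (k * t) 0).mul_left a).add ((aux_desc (k * t) 1).mul_left (b / k))).add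
    ((aux_desc (k * t) 2).mul_left (c / k ^ 2))).add
    ((aux_desc (k * t) 3).mul_left (d / k ^ 3))).add
    ((aux_desc (k * t) 4).mul_left (e / k ^ 4))
  have hv : Real.exp (k * t) * (e * t ^ 4 + d * t ^ 3 + c * t ^ 2 + b * t + a) =
      a * ((k * t) ^ 0 * Real.exp (k * t)) + b / k * ((k * t) ^ 1 * Real.exp (k * t)) +
          c / k ^ 2 * ((k * t) ^ 2 * Real.exp (k * t)) +
        d / k ^ 3 * ((k * t) ^ 3 * Real.exp (k * t)) +
      e / k ^ 4 * ((k * t) ^ 4 * Real.exp (k * t)) := by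
    field_simp
    ring
  rw [hv]
  refine h.congr_fun ?_
  · intro n
    have e1 : ((n.descFactorial 1 : ℕ) : ℝ) = n := by simp
    have e2 : ((n.descFactorial 2 : ℕ) : ℝ) = n * (n - 1) := by
      rcases n with _ | n <;> simp [Nat.descFactorial]; ring
    have e3 : ((n.descFactorial 3 : ℕ) : ℝ) = n * (n - 1) * (n - 2) := by
      rcases n with _ | _ | n <;> simp [Nat.descFactorial]; ring
    have e4 : ((n.descFactorial 4 : ℕ) : ℝ) = n * (n - 1) * (n - 2) * (n - 3) := by
      rcases n with _ | _ | _ | n <;> simp [Nat.descFactorial]; ring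
    rw [e1, e2, e3, e4, Nat.descFactorial_zero, auxP, mul_pow]
    push_cast
    ring

noncomputable def auxC (n : ℕ) : ℝ :=
  auxP 5 (-280) 156 (-30) 2 0 n * 5 ^ n + auxP 4 1236 (-420) 132 (-16) 1 n * 4 ^ n
  - auxP 3 2036 (-264) 250 (-52) 10 n * 3 ^ n + auxP 2 1660 (-228) 356 (-88) 17 n * 2 ^ n
  - auxP 1 756 (-228) 40 (-38) 8 n * 1 ^ n + (if n = 0 then 176 else 0)

lemma auxC_nonneg (n : ℕ) : 0 ≤ auxC n := by
  rcases lt_or_ge n 40 with h | h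
  · unfold auxC auxP
    interval_cases n <;> norm_num
  · obtain ⟨m, rfl⟩ := Nat.exists_eq_add_of_le h
    have hm : (0 : ℝ) ≤ m := Nat.cast_nonneg m
    unfold auxC
    have hA : 0 ≤ auxP 5 (-280) 156 (-30) 2 0 (40 + m) := by
      unfold auxP; push_cast; ring_nf; positivity
    have hB : auxP 3 2036 (-264) 250 (-52) 10 (40 + m)
        ≤ 90000 * auxP 4 1236 (-420) 132 (-16) 1 (40 + m) := by
      rw [← sub_nonneg]
      unfold auxP; push_cast; ring_nf; positivity
    have hB0 : 0 ≤ auxP 4 1236 (-420) 132 (-16) 1 (40 + m) := by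
      unfold auxP; push_cast; ring_nf; positivity
    have hD : auxP 1 756 (-228) 40 (-38) 8 (40 + m)
        ≤ 1000 * auxP 2 1660 (-228) 356 (-88) 17 (40 + m) := by
      rw [← sub_nonneg]
      unfold auxP; push_cast; ring_nf; positivity
    have hD0 : 0 ≤ auxP 2 1660 (-228) 356 (-88) 17 (40 + m) := by
      unfold auxP; push_cast; ring_nf; positivity
    have p1 : (90000 : ℝ) * 3 ^ (40 + m) ≤ 4 ^ (40 + m) := by
      rw [pow_add, pow_add, ← mul_assoc]
      gcongr <;> norm_num
    have p2 : (1000 : ℝ) * 1 ^ (40 + m) ≤ 2 ^ (40 + m) := by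
      rw [pow_add, pow_add, ← mul_assoc]
      gcongr <;> norm_num
    have q0 := mul_nonneg hA (by positivity : (0 : ℝ) ≤ 5 ^ (40 + m))
    have q1 := mul_le_mul_of_nonneg_left p1 hB0
    have q2 := mul_le_mul_of_nonneg_right hB (by positivity : (0 : ℝ) ≤ 3 ^ (40 + m))
    have q3 := mul_le_mul_of_nonneg_left p2 hD0
    have q4 := mul_le_mul_of_nonneg_right hD (by positivity : (0 : ℝ) ≤ 1 ^ (40 + m))
    have q5 : (0 : ℝ) ≤ if 40 + m = 0 then 176 else 0 := by split_ifs <;> norm_num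
    linarith

theorem stmt_16 (t : ℝ) (ht : t ∈ Set.Ioi (0 : ℝ)) :
    0 < 2 * Real.exp (5 * t) * (t ^ 3 - 15 * t ^ 2 + 78 * t - 140) +
        Real.exp (4 * t) * (t ^ 4 - 16 * t ^ 3 + 132 * t ^ 2 - 420 * t + 1236) -
        2 * Real.exp (3 * t) *
          (5 * t ^ 4 - 26 * t ^ 3 + 125 * t ^ 2 - 132 * t + 1018) +
        Real.exp (2 * t) *
          (17 * t ^ 4 - 88 * t ^ 3 + 356 * t ^ 2 - 228 * t + 1660) -
        Real.exp t * (8 * t ^ 4 - 38 * t ^ 3 + 40 * t ^ 2 - 228 * t + 756) +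
        176 := by
  have ht0 : 0 < t := ht
  have hc : HasSum (fun n : ℕ => (if n = 0 then (176 : ℝ) else 0) * (t ^ n / (n.factorial : ℝ)))
      176 := by
    have := hasSum_single (f := fun n : ℕ => (if n = 0 then (176 : ℝ) else 0) *
      (t ^ n / (n.factorial : ℝ))) 0 (by intro n hn; simp [hn])
    simpa using this
  have h := (((((aux_poly t 5 (-280) 156 (-30) 2 0 (by norm_num)).add
    (aux_poly t 4 1236 (-420) 132 (-16) 1 (by norm_num))).sub
    (aux_poly t 3 2036 (-264) 250 (-52) 10 (by norm_num))).add
    (aux_poly t 2 1660 (-228) 356 (-88) 17 (by norm_num))).sub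
    (aux_poly t 1 756 (-228) 40 (-38) 8 (by norm_num))).add hc
  have h' := h.congr_fun (g := fun n : ℕ => auxC n * (t ^ n / (n.factorial : ℝ))) (by
    intro n
    unfold auxC
    ring)
  have hp := lt_of_lt_of_le
    (mul_pos (by unfold auxC auxP; norm_num : 0 < auxC 8)
      (by positivity : 0 < t ^ 8 / (Nat.factorial 8 : ℝ)))
    (le_hasSum h' 8 (fun n _ => mul_nonneg (auxC_nonneg n) (by positivity)))
  rw [one_mul t] at hp
  linarith
end

section
/- lim_{x→0⁺} [12x⁴(x+1)²([ψ'(x)]² + ψ''(x)) − x² − 12]/x = 0. -/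
lemma gamma_an (x : ℝ) (hx : 0 < x) : AnalyticAt ℝ Real.Gamma x := by
  have h : AnalyticAt ℂ Complex.Gamma (x:ℂ) := by
    rw [Complex.analyticAt_iff_eventually_differentiableAt]
    have : {z : ℂ | 0 < z.re} ∈ nhds (x:ℂ) :=
      (isOpen_lt continuous_const Complex.continuous_re).mem_nhds (by simpa using hx)
    filter_upwards [this] with z hz
    apply Complex.differentiableAt_Gamma
    rintro m rfl
    have : (0:ℝ) ≤ m := Nat.cast_nonneg m
    simp at hz
    linarith
  exact h.re_ofReal

lemma dig_an (x : ℝ) (hx : 0 < x) : AnalyticAt ℝ digamma x :=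
  (gamma_an x hx).deriv.div (gamma_an x hx) (Real.Gamma_pos_of_pos hx).ne'

lemma dig_eq (x : ℝ) (hx : 0 < x) : digamma x = digamma (x+1) - 1/x := by
  have h1 : Real.Gamma =ᶠ[nhds x] fun y => Real.Gamma (y+1) / y := by
    filter_upwards [lt_mem_nhds hx] with y hy
    rw [Real.Gamma_add_one hy.ne']; field_simp
  have hd : HasDerivAt Real.Gamma (deriv Real.Gamma (x+1)) (x+1) :=
    (gamma_an (x+1) (by linarith)).differentiableAt.hasDerivAt
  have h2 := ((hd.comp_add_const x 1).div (hasDerivAt_id x) hx.ne').congr_of_eventuallyEq h1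
  have hg := Real.Gamma_pos_of_pos hx
  unfold digamma
  rw [h2.deriv, Real.Gamma_add_one hx.ne']
  simp only [id]
  field_simp


lemma d1 (x : ℝ) (hx : 0 < x) : deriv digamma x = deriv digamma (x+1) + 1/x^2 := by
  have h1 : digamma =ᶠ[nhds x] fun y => digamma (y+1) - y⁻¹ := by
    filter_upwards [lt_mem_nhds hx] with y hy
    rw [dig_eq y hy, one_div]
  have hd : HasDerivAt digamma (deriv digamma (x+1)) (x+1) :=
    (dig_an (x+1) (by linarith)).differentiableAt.hasDerivAt
  rw [(((hd.comp_add_const x 1).sub (hasDerivAt_inv hx.ne')).congr_of_eventuallyEq h1).deriv]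
  field_simp
  ring

lemma d2 (x : ℝ) (hx : 0 < x) :
    deriv (deriv digamma) x = deriv (deriv digamma) (x+1) - 2/x^3 := by
  have h1 : deriv digamma =ᶠ[nhds x] fun y => deriv digamma (y+1) + (y^2)⁻¹ := by
    filter_upwards [lt_mem_nhds hx] with y hy
    rw [d1 y hy, one_div]
  have hd : HasDerivAt (deriv digamma) (deriv (deriv digamma) (x+1)) (x+1) :=
    (dig_an (x+1) (by linarith)).deriv.differentiableAt.hasDerivAt
  rw [(((hd.comp_add_const x 1).add ((hasDerivAt_pow 2 x).fun_inv
    (pow_ne_zero 2 hx.ne'))).congr_of_eventuallyEq h1).deriv]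
  field_simp
  ring

theorem stmt_17 :
    Filter.Tendsto
      (fun x : ℝ =>
        (12 * x ^ 4 * (x + 1) ^ 2 *
            ((deriv digamma x) ^ 2 + deriv (deriv digamma) x) - x ^ 2 - 12) / x)
      (nhdsWithin 0 (Set.Ioi 0)) (nhds 0) := by
  have hA : ContinuousAt (fun x : ℝ => deriv digamma (x+1)) 0 :=
    ContinuousAt.comp (f := fun x : ℝ => x + 1) (g := deriv digamma)
      (dig_an _ (by norm_num)).deriv.continuousAt (by fun_prop)
  have hB : ContinuousAt (fun x : ℝ => deriv (deriv digamma) (x+1)) 0 :=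
    ContinuousAt.comp (f := fun x : ℝ => x + 1) (g := deriv (deriv digamma))
      (dig_an _ (by norm_num)).deriv.deriv.continuousAt (by fun_prop)
  have hF : ContinuousAt (fun x : ℝ => 12 * (x+1)^2 * (2 * deriv digamma (x+1) * x
      + x^3 * ((deriv digamma (x+1))^2 + deriv (deriv digamma) (x+1))) - 37 * x - 24 * x^2) 0 := by
    fun_prop
  have hF' := hF.tendsto.mono_left (nhdsWithin_le_nhds (s := Set.Ioi 0))
  norm_num at hF'
  refine hF'.congr' ?_
  filter_upwards [self_mem_nhdsWithin] with x hx
  have hx : 0 < x := hx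
  rw [d1 x hx, d2 x hx]
  field_simp
  ring
end

section
/- lim_{x→∞} [12x⁴(x+1)²([ψ'(x)]² + ψ''(x)) − x² − 12]/x = 4. -/
open Filter Topology Set

lemma aux_const (A B : ℝ → ℝ) (hA : MonotoneOn A (Ioi 1)) (hB : MonotoneOn B (Ioi 1))
    (fA : ∀ x > 1, A (x + 1) = A x + 1 / x) (fB : ∀ x > 1, B (x + 1) = B x + 1 / x)
    (x y : ℝ) (hx : 1 < x) (hxy : x ≤ y) : A x - B x = A y - B y := by
  have up : ∀ (F : ℝ → ℝ), (∀ x > 1, F (x + 1) = F x + 1 / x) → ∀ z > 1, ∀ m : ℕ,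
      F (z + m) ≤ F z + m / z := by
    intro F fF z hz m
    induction m with
    | zero => simp
    | succ k ih =>
      have hk : (0 : ℝ) ≤ k := Nat.cast_nonneg k
      have h1 := fF (z + k) (by linarith)
      have h2 : 1 / (z + k) ≤ 1 / z := one_div_le_one_div_of_le (by linarith) (by linarith)
      push_cast
      rw [← add_assoc, h1, add_div]
      linarith
  have per : ∀ z > 1, ∀ n : ℕ, A (z + n) - B (z + n) = A z - B z := by
    intro z hz n
    induction n with
    | zero => simp
    | succ k ih =>
      have hk : (0 : ℝ) ≤ k := Nat.cast_nonneg k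
      push_cast
      rw [← add_assoc, fA _ (by linarith), fB _ (by linarith)]
      linarith
  obtain ⟨m, hm⟩ := exists_nat_ge (y - x)
  have key : ∀ n : ℕ, |(A x - B x) - (A y - B y)| ≤ m / (x + n) := by
    intro n
    have hn : (0 : ℝ) ≤ n := Nat.cast_nonneg n
    rw [← per x hx n, ← per y (by linarith) n]
    have a1 := hA (a := x + n) (b := y + n) (by simp; linarith) (by simp; linarith) (by linarith)
    have a2 := hA (a := y + n) (b := x + n + m) (by simp; linarith) (by simp; linarith)
      (by linarith)
    have a3 := up A fA (x + n) (by linarith) m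
    have b1 := hB (a := x + n) (b := y + n) (by simp; linarith) (by simp; linarith) (by linarith)
    have b2 := hB (a := y + n) (b := x + n + m) (by simp; linarith) (by simp; linarith)
      (by linarith)
    have b3 := up B fB (x + n) (by linarith) m
    rw [abs_le]
    constructor <;> linarith
  have lim : Tendsto (fun n : ℕ => (m : ℝ) / (x + n)) atTop (𝓝 0) :=
    Tendsto.div_atTop tendsto_const_nhds
      (tendsto_atTop_add_const_left _ _ tendsto_natCast_atTop_atTop)
  have := ge_of_tendsto' lim key
  have := abs_nonpos_iff.1 this
  linarith

lemma dig_mono : MonotoneOn digamma (Ioi 1) := by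
  have hc : ConvexOn ℝ (Ioi 1) (Real.log ∘ Real.Gamma) :=
    Real.convexOn_log_Gamma.subset (Ioi_subset_Ioi zero_le_one) (convex_Ioi 1)
  have hd : ∀ x ∈ Ioi (1:ℝ), HasDerivAt (Real.log ∘ Real.Gamma) (digamma x) x := by
    intro x hx
    have hx : 1 < x := hx
    have h0 : DifferentiableAt ℝ Real.Gamma x :=
      Real.differentiableAt_Gamma (fun m => by
        have : (0 : ℝ) ≤ m := Nat.cast_nonneg m
        linarith)
    exact h0.hasDerivAt.log (Real.Gamma_pos_of_pos (by linarith)).ne'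
  intro x hx y hy hxy
  have := hc.monotoneOn_deriv (fun x hx => (hd x hx).differentiableAt) hx hy hxy
  rwa [(hd x hx).deriv, (hd y hy).deriv] at this

lemma dig_fe (x : ℝ) (hx : 1 < x) : digamma (x + 1) = digamma x + 1 / x := by
  have h0 : DifferentiableAt ℝ Real.Gamma x :=
    Real.differentiableAt_Gamma (fun m => by
      have : (0 : ℝ) ≤ m := Nat.cast_nonneg m
      linarith)
  have h1 : deriv Real.Gamma (x + 1) = Real.Gamma x + x * deriv Real.Gamma x := by
    rw [← deriv_comp_add_const]
    have : (fun x => Real.Gamma (x + 1)) =ᶠ[𝓝 x] fun x => x * Real.Gamma x := by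
      filter_upwards [lt_mem_nhds hx] with z hz
      exact Real.Gamma_add_one (by linarith)
    rw [this.deriv_eq]
    have := ((hasDerivAt_id x).mul h0.hasDerivAt).deriv
    simpa [Pi.mul_def] using this
  have hg := (Real.Gamma_pos_of_pos (s := x) (by linarith)).ne'
  have hx0 : x ≠ 0 := by linarith
  unfold digamma
  rw [h1, Real.Gamma_add_one hx0]
  field_simp
  ring

noncomputable def EE (x : ℝ) : ℝ := ∑' n : ℕ, (1 / ((n : ℝ) + 2) - 1 / (x + n))
noncomputable def T1 (x : ℝ) : ℝ := ∑' n : ℕ, (1 / (x + n) ^ 2)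
noncomputable def T2 (x : ℝ) : ℝ := ∑' n : ℕ, (-2 / (x + n) ^ 3)

lemma sm (k : ℕ) (hk : 1 < k) : Summable (fun n : ℕ => 1 / ((n : ℝ) + 1) ^ k) := by
  have := (summable_nat_add_iff 1).2 (Real.summable_one_div_nat_pow.2 hk)
  simpa using this

lemma sm2 (x : ℝ) (hx : 1 < x) (k : ℕ) (hk : 1 < k) (c : ℝ) :
    Summable (fun n : ℕ => c / (x + n) ^ k) := by
  have : Summable (fun n : ℕ => 1 / (x + n) ^ k) := by
    refine Summable.of_nonneg_of_le (fun n => by positivity) (fun n => ?_) (sm k hk)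
    gcongr 1 / ?_ ^ k
    linarith
  simpa [div_eq_mul_inv] using this.mul_left c

lemma E_term (n : ℕ) (y : ℝ) (hy : y ∈ Ioi (1:ℝ)) :
    HasDerivAt (fun x : ℝ => 1 / ((n : ℝ) + 2) - 1 / (x + n)) (1 / (y + n) ^ 2) y := by
  have hn : (0 : ℝ) ≤ n := Nat.cast_nonneg n
  have hy : 1 < y := hy
  have h0 : y + n ≠ 0 := by linarith
  have := (((hasDerivAt_id y).add_const (n : ℝ)).inv h0).const_sub (1 / ((n : ℝ) + 2))
  convert! this using 1
  · ext; simp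
  · simp; field_simp

lemma T_term (n : ℕ) (y : ℝ) (hy : y ∈ Ioi (1:ℝ)) :
    HasDerivAt (fun x : ℝ => 1 / (x + n) ^ 2) (-2 / (y + n) ^ 3) y := by
  have hn : (0 : ℝ) ≤ n := Nat.cast_nonneg n
  have hy : 1 < y := hy
  have h0 : y + n ≠ 0 := by linarith
  have := (((hasDerivAt_id y).add_const (n : ℝ)).pow 2).inv (pow_ne_zero 2 h0)
  convert! this using 1
  · ext; simp
  · simp; field_simp

lemma bd1 (n : ℕ) (y : ℝ) (hy : y ∈ Ioi (1:ℝ)) : ‖1 / (y + n) ^ 2‖ ≤ 1 / ((n : ℝ) + 1) ^ 2 := by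
  have hy : 1 < y := hy
  rw [Real.norm_of_nonneg (by positivity)]
  gcongr 1 / ?_ ^ 2
  linarith

lemma bd2 (n : ℕ) (y : ℝ) (hy : y ∈ Ioi (1:ℝ)) :
    ‖-2 / (y + n) ^ 3‖ ≤ 2 * (1 / ((n : ℝ) + 1) ^ 3) := by
  have hy : 1 < y := hy
  rw [neg_div, norm_neg, Real.norm_of_nonneg (by positivity), mul_one_div]
  gcongr 2 / ?_ ^ 3
  linarith

lemma E_sm (x : ℝ) (hx : 1 < x) : Summable (fun n : ℕ => 1 / ((n : ℝ) + 2) - 1 / (x + n)) :=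
  summable_of_summable_hasDerivAt_of_isPreconnected (sm 2 (by norm_num)) isOpen_Ioi
    isPreconnected_Ioi E_term bd1 (y₀ := 2) (by simp)
    (by simp [add_comm (2 : ℝ), summable_zero]) hx

lemma E_deriv (x : ℝ) (hx : 1 < x) : HasDerivAt EE (T1 x) x :=
  hasDerivAt_tsum_of_isPreconnected (sm 2 (by norm_num)) isOpen_Ioi
    isPreconnected_Ioi E_term bd1 (y₀ := 2) (by simp) (E_sm 2 (by norm_num)) hx

lemma T_deriv (x : ℝ) (hx : 1 < x) : HasDerivAt T1 (T2 x) x :=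
  hasDerivAt_tsum_of_isPreconnected ((sm 3 (by norm_num)).mul_left 2) isOpen_Ioi
    isPreconnected_Ioi T_term bd2 (y₀ := 2) (by simp) (sm2 2 (by norm_num) 2 (by norm_num) 1) hx

lemma E_mono : MonotoneOn EE (Ioi 1) := by
  intro x hx y hy hxy
  have hx : 1 < x := hx
  refine Summable.tsum_le_tsum (fun n => ?_) (E_sm x hx) (E_sm y hy)
  gcongr

lemma E_fe (x : ℝ) (hx : 1 < x) : EE (x + 1) = EE x + 1 / x := by
  have h1 : HasSum (fun n : ℕ => 1 / (x + n) - 1 / (x + (n + 1 : ℕ))) (1 / x) := by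
    rw [hasSum_iff_tendsto_nat_of_nonneg]
    · simp_rw [Finset.sum_range_sub' (fun n : ℕ => 1 / (x + n))]
      have : Tendsto (fun n : ℕ => (1 : ℝ) / (x + n)) atTop (𝓝 0) :=
        Tendsto.div_atTop tendsto_const_nhds
          (tendsto_atTop_add_const_left _ _ tendsto_natCast_atTop_atTop)
      simpa using this.const_sub (1 / x)
    · intro n
      rw [sub_nonneg]
      gcongr
      linarith
  have h2 := (E_sm x hx).hasSum.add h1
  unfold EE
  rw [← h2.tsum_eq]
  congr 1
  ext n
  push_cast
  rw [show x + 1 + (n : ℝ) = x + (n + 1) by ring]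
  ring

lemma dig_eq_s18 (x : ℝ) (hx : 1 < x) : HasDerivAt digamma (T1 x) x := by
  have h : digamma =ᶠ[𝓝 x] fun y => EE y + (digamma 2 - EE 2) := by
    filter_upwards [lt_mem_nhds hx] with z hz
    rcases le_total z 2 with h | h
    · have := aux_const _ _ dig_mono E_mono dig_fe E_fe z 2 hz h
      linarith
    · have := aux_const _ _ dig_mono E_mono dig_fe E_fe 2 z (by norm_num) h
      linarith
  exact ((E_deriv x hx).add_const _).congr_of_eventuallyEq h

lemma dig_eq2 (x : ℝ) (hx : 1 < x) : deriv (deriv digamma) x = T2 x := by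
  have h : deriv digamma =ᶠ[𝓝 x] T1 := by
    filter_upwards [lt_mem_nhds hx] with z hz
    exact (dig_eq_s18 z hz).deriv
  rw [h.deriv_eq, (T_deriv x hx).deriv]

lemma tele (d h : ℝ → ℝ) (x : ℝ) (H : ∀ y ≥ x, |d y - d (y + 1)| ≤ h y - h (y + 1))
    (hd : Tendsto (fun n : ℕ => d (x + n)) atTop (𝓝 0))
    (hh : Tendsto (fun n : ℕ => h (x + n)) atTop (𝓝 0)) : |d x| ≤ h x := by
  have key : ∀ n : ℕ, |d x - d (x + n)| ≤ h x - h (x + n) := by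
    intro n
    induction n with
    | zero => simp
    | succ k ih =>
      have hk : (0 : ℝ) ≤ k := Nat.cast_nonneg k
      have := H (x + k) (by linarith)
      push_cast
      rw [← add_assoc]
      have := abs_sub_le (d x) (d (x + k)) (d (x + k + 1))
      linarith
  have := le_of_tendsto_of_tendsto' (hd.const_sub (d x)).abs (hh.const_sub (h x)) key
  simpa using this

lemma T_fe (c : ℝ) (k : ℕ) (hk : 1 < k) (x : ℝ) (hx : 1 < x) :
    (∑' n : ℕ, c / (x + n) ^ k) - (∑' n : ℕ, c / (x + 1 + n) ^ k) = c / x ^ k := by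
  rw [(sm2 x hx k hk c).tsum_eq_zero_add]
  have : ∀ n : ℕ, c / (x + 1 + n) ^ k = c / (x + (n + 1 : ℕ)) ^ k := by
    intro n; push_cast; rw [add_assoc, add_comm (1 : ℝ)]
  simp_rw [this]
  simp

lemma T_lim (c : ℝ) (k : ℕ) (x : ℝ) :
    Tendsto (fun m : ℕ => ∑' n : ℕ, c / (x + m + n) ^ k) atTop (𝓝 0) := by
  have := tendsto_sum_nat_add (fun n : ℕ => c / (x + n) ^ k)
  refine this.congr (fun m => ?_)
  congr 1
  ext n
  push_cast
  rw [add_assoc, add_comm (m : ℝ)]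

lemma inv_lim (c x : ℝ) (k : ℕ) (hk : k ≠ 0) :
    Tendsto (fun n : ℕ => c / (x + n) ^ k) atTop (𝓝 0) :=
  Tendsto.div_atTop tendsto_const_nhds ((tendsto_pow_atTop hk).comp
      (tendsto_atTop_add_const_left _ _ tendsto_natCast_atTop_atTop))

lemma T1_asym (x : ℝ) (hx : 1 < x) :
    |T1 x - (1 / x ^ 1 + (1/2) / x ^ 2 + (1/6) / x ^ 3)| ≤ 1 / x ^ 5 := by
  refine tele (fun x => T1 x - (1 / x ^ 1 + (1/2) / x ^ 2 + (1/6) / x ^ 3))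
    (fun x => 1 / x ^ 5) x ?_ ?_ (inv_lim 1 x 5 (by norm_num))
  · intro y hy
    have hy1 : 1 < y := by linarith
    have := T_fe 1 2 (by norm_num) y hy1
    change T1 y - T1 (y + 1) = _ at this
    have e : T1 y = T1 (y + 1) + 1 / y ^ 2 := by linarith
    simp only [e]
    obtain ⟨t, rfl⟩ : ∃ t, y = 1 + t := ⟨y - 1, by ring⟩
    have ht : 0 < t := by linarith
    rw [abs_le]
    constructor
    · rw [← sub_nonneg]
      field_simp
      ring_nf
      positivity
    · rw [← sub_nonneg]
      field_simp
      ring_nf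
      positivity
  · have := (T_lim 1 2 x).sub (((inv_lim 1 x 1 (by norm_num)).add (inv_lim (1/2) x 2
      (by norm_num))).add (inv_lim (1/6) x 3 (by norm_num)))
    simpa [T1] using this

lemma T2_asym (x : ℝ) (hx : 1 < x) :
    |T2 x - (-1 / x ^ 2 + (-1) / x ^ 3 + (-1/2) / x ^ 4)| ≤ 1 / x ^ 6 := by
  refine tele (fun x => T2 x - (-1 / x ^ 2 + (-1) / x ^ 3 + (-1/2) / x ^ 4))
    (fun x => 1 / x ^ 6) x ?_ ?_ (inv_lim 1 x 6 (by norm_num))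
  · intro y hy
    have hy1 : 1 < y := by linarith
    have := T_fe (-2) 3 (by norm_num) y hy1
    change T2 y - T2 (y + 1) = _ at this
    have e : T2 y = T2 (y + 1) + -2 / y ^ 3 := by linarith
    simp only [e]
    obtain ⟨t, rfl⟩ : ∃ t, y = 1 + t := ⟨y - 1, by ring⟩
    have ht : 0 < t := by linarith
    rw [abs_le]
    constructor
    · rw [← sub_nonneg]
      field_simp
      ring_nf
      positivity
    · rw [← sub_nonneg]
      field_simp
      ring_nf
      positivity
  · have := (T_lim (-2) 3 x).sub (((inv_lim (-1) x 2 (by norm_num)).add (inv_lim (-1) x 3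
      (by norm_num))).add (inv_lim (-1/2) x 4 (by norm_num)))
    simpa [T2] using this

theorem stmt_18 :
    Filter.Tendsto
      (fun x : ℝ =>
        (12 * x ^ 4 * (x + 1) ^ 2 *
            ((deriv digamma x) ^ 2 + deriv (deriv digamma) x) - x ^ 2 - 12) / x)
      Filter.atTop (nhds 4) := by
  have hlim : Tendsto (fun x : ℝ => 1000 / x) atTop (𝓝 0) :=
    Tendsto.div_atTop tendsto_const_nhds tendsto_id
  rw [tendsto_iff_dist_tendsto_zero]
  refine squeeze_zero' (Eventually.of_forall fun _ => dist_nonneg) ?_ hlim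
  filter_upwards [eventually_gt_atTop 1] with x hx
  rw [dig_eq2 x hx, (dig_eq_s18 x hx).deriv, Real.dist_eq]
  have h0 : 0 < x := by linarith
  obtain ⟨u, hu⟩ : ∃ u, u = (T1 x - (1 / x ^ 1 + (1/2) / x ^ 2 + (1/6) / x ^ 3)) * x ^ 5 := ⟨_, rfl⟩
  obtain ⟨v, hv⟩ : ∃ v, v = (T2 x - (-1 / x ^ 2 + (-1) / x ^ 3 + (-1/2) / x ^ 4)) * x ^ 6 :=
    ⟨_, rfl⟩
  have hu1 : |u| ≤ 1 := by
    rw [hu, abs_mul, abs_of_pos (pow_pos h0 5), ← le_div_iff₀ (by positivity)]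
    exact T1_asym x hx
  have hv1 : |v| ≤ 1 := by
    rw [hv, abs_mul, abs_of_pos (pow_pos h0 6), ← le_div_iff₀ (by positivity)]
    exact T2_asym x hx
  have e1 : T1 x = 1 / x ^ 1 + (1/2) / x ^ 2 + (1/6) / x ^ 3 + u / x ^ 5 := by
    rw [hu]; field_simp; ring
  have e2 : T2 x = -1 / x ^ 2 + (-1) / x ^ 3 + (-1/2) / x ^ 4 + v / x ^ 6 := by
    rw [hv]; field_simp; ring
  obtain ⟨w, hw⟩ : ∃ w, w = 1 / x := ⟨_, rfl⟩
  have hw0 : 0 < w := by rw [hw]; positivity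
  have hw1 : w ≤ 1 := by rw [hw, div_le_one h0]; linarith
  have hx' : x = 1 / w := by rw [hw]; field_simp
  have e3 : (12 * x ^ 4 * (x + 1) ^ 2 * (T1 x ^ 2 + T2 x) - x ^ 2 - 12) / x - 4
      = (-7 + 2 * w + 12 * (1/36 + u * (2 + w + w ^ 2 / 3) + u ^ 2 * w ^ 4 + v) * (1 + w) ^ 2)
        / x := by
    rw [e1, e2, hx']
    field_simp
    ring
  rw [e3, abs_div, abs_of_pos h0]
  gcongr
  have hR : |1/36 + u * (2 + w + w ^ 2 / 3) + u ^ 2 * w ^ 4 + v| ≤ 10 := by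
    have a1 : |u * (2 + w + w ^ 2 / 3)| ≤ 1 * 4 := by
      rw [abs_mul]
      gcongr
      rw [abs_of_pos (by positivity)]
      nlinarith
    have a2 : |u ^ 2 * w ^ 4| ≤ 1 * 1 := by
      rw [abs_mul]
      gcongr
      · rw [abs_pow]; exact pow_le_one₀ (abs_nonneg _) hu1
      · rw [abs_of_pos (by positivity)]; exact pow_le_one₀ hw0.le hw1
    rw [abs_le] at *
    constructor <;> linarith
  have hS : |(1/36 + u * (2 + w + w ^ 2 / 3) + u ^ 2 * w ^ 4 + v) * (1 + w) ^ 2| ≤ 10 * 4 := by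
    rw [abs_mul]
    gcongr
    rw [abs_of_pos (by positivity)]
    nlinarith
  rw [mul_assoc]
  rw [abs_le] at *
  constructor <;> linarith
end

section
/- Let λ > 0. Then the function f_λ(x) = [ψ'(x)]² + ψ''(x) − (x² + λx + 12)/(12x⁴(x+1)²) tends to −∞ as x → 0⁺. -/
theorem aux_Gamma_analytic {x : ℝ} (hx : 0 < x) : AnalyticAt ℝ Real.Gamma x := by
  have h : AnalyticAt ℂ Complex.Gamma (x : ℂ) := by
    rw [Complex.analyticAt_iff_eventually_differentiableAt]
    have hopen : IsOpen {z : ℂ | 0 < z.re} := isOpen_lt continuous_const Complex.continuous_re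
    filter_upwards [hopen.mem_nhds (show (x : ℂ) ∈ {z : ℂ | 0 < z.re} by simpa using hx)] with z hz
    apply Complex.differentiableAt_Gamma
    intro m hm
    simp only [hm, Complex.neg_re, Complex.natCast_re] at hz
    have : (0 : ℝ) ≤ m := Nat.cast_nonneg m
    linarith
  exact h.re_ofReal

theorem aux_digamma_analytic {x : ℝ} (hx : 0 < x) : AnalyticAt ℝ digamma x :=
  (aux_Gamma_analytic hx).deriv.div (aux_Gamma_analytic hx) (Real.Gamma_pos_of_pos hx).ne'

theorem aux_digamma_rec {x : ℝ} (hx : 0 < x) : digamma x = digamma (x + 1) - x⁻¹ := by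
  have hd : HasDerivAt Real.Gamma (deriv Real.Gamma x) x :=
    (aux_Gamma_analytic hx).differentiableAt.hasDerivAt
  have h1 : deriv Real.Gamma (x + 1) = Real.Gamma x + x * deriv Real.Gamma x := by
    rw [← deriv_comp_add_const]
    have he : (fun y => Real.Gamma (y + 1)) =ᶠ[nhds x] fun y => y * Real.Gamma y := by
      filter_upwards [lt_mem_nhds hx] with y hy
      exact Real.Gamma_add_one hy.ne'
    rw [he.deriv_eq]
    refine Eq.trans ((hasDerivAt_id x).mul hd).deriv ?_
    simp
  have hG := (Real.Gamma_pos_of_pos hx).ne'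
  unfold digamma
  rw [h1, Real.Gamma_add_one hx.ne']
  field_simp
  ring

theorem aux_deriv1 {x : ℝ} (hx : 0 < x) :
    deriv digamma x = deriv digamma (x + 1) + (x ^ 2)⁻¹ := by
  have he : digamma =ᶠ[nhds x] fun y => digamma (y + 1) - y⁻¹ := by
    filter_upwards [lt_mem_nhds hx] with y hy
    exact aux_digamma_rec hy
  rw [he.deriv_eq]
  have h1 : HasDerivAt (fun y => digamma (y + 1)) (deriv digamma (x + 1)) x :=
    (aux_digamma_analytic (by linarith : 0 < x + 1)).differentiableAt.hasDerivAt.comp_add_const x 1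
  have := (h1.sub (hasDerivAt_inv hx.ne')).deriv
  rw [sub_neg_eq_add] at this
  exact this

theorem aux_deriv2 {x : ℝ} (hx : 0 < x) :
    deriv (deriv digamma) x = deriv (deriv digamma) (x + 1) - 2 / x ^ 3 := by
  have he : deriv digamma =ᶠ[nhds x] fun y => deriv digamma (y + 1) + (y ^ 2)⁻¹ := by
    filter_upwards [lt_mem_nhds hx] with y hy
    exact aux_deriv1 hy
  rw [he.deriv_eq]
  have h1 : HasDerivAt (fun y => deriv digamma (y + 1)) (deriv (deriv digamma) (x + 1)) x :=
    (aux_digamma_analytic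
      (by linarith : 0 < x + 1)).deriv.differentiableAt.hasDerivAt.comp_add_const x 1
  have h2 := (hasDerivAt_pow 2 x).inv (pow_ne_zero 2 hx.ne')
  have := (h1.add h2).deriv
  refine Eq.trans this ?_
  field_simp
  ring

theorem stmt_19 (lam : ℝ) (hlam : 0 < lam) :
    Filter.Tendsto
      (fun x : ℝ => (deriv digamma x) ^ 2 + deriv (deriv digamma) x -
        (x ^ 2 + lam * x + 12) / (12 * x ^ 4 * (x + 1) ^ 2))
      (nhdsWithin 0 (Set.Ioi 0)) Filter.atBot := by
  have hc1 : ContinuousAt (fun x : ℝ => deriv digamma (x + 1)) 0 :=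
    ContinuousAt.comp' (by simpa using (aux_digamma_analytic one_pos).deriv.continuousAt)
      (by fun_prop)
  have hc2 : ContinuousAt (fun x : ℝ => deriv (deriv digamma) (x + 1)) 0 :=
    ContinuousAt.comp' (by simpa using (aux_digamma_analytic one_pos).deriv.deriv.continuousAt)
      (by fun_prop)
  have hc3 : ContinuousAt (fun x : ℝ => (11 * x + 24 - lam) / (12 * (x + 1) ^ 2)) 0 :=
    ContinuousAt.div (by fun_prop) (by fun_prop) (by norm_num)
  have hc : ContinuousAt (fun x : ℝ => (11 * x + 24 - lam) / (12 * (x + 1) ^ 2) - 2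
      + 2 * x * deriv digamma (x + 1) + x ^ 3 * (deriv digamma (x + 1)) ^ 2
      + x ^ 3 * deriv (deriv digamma) (x + 1)) 0 := by
    fun_prop
  have hT := hc.tendsto.mono_left (nhdsWithin_le_nhds (s := Set.Ioi 0))
  have hinv : Filter.Tendsto (fun x : ℝ => (x⁻¹) ^ 3) (nhdsWithin 0 (Set.Ioi 0)) Filter.atTop :=
    (Filter.tendsto_pow_atTop (by norm_num)).comp tendsto_inv_nhdsGT_zero
  refine (Filter.Tendsto.neg_mul_atTop ?_ hT hinv).congr' ?_
  · norm_num
    linarith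
  · filter_upwards [self_mem_nhdsWithin] with x hx
    have hx : 0 < x := hx
    rw [aux_deriv1 hx, aux_deriv2 hx]
    have : x + 1 ≠ 0 := by linarith
    field_simp
    ring
end
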